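/- Main theorem (Theorem 1): for every ε ∈ [0,1] and every liquid democracy game, there exists an ε-Nash equilibrium x with SW(x) ≥ ε · OPT. -/

import Mathlib

open Finset

/-- The guru of agent `i` under pure profile `s` (where `s i = some j` means `i`
delegates to `j`, with `s i = some i` meaning `i` votes herself, and `s i = none`
meaning `i` abstains): follow delegation arcs for `n` steps; the endpoint is the
guru provided it votes itself. -/
def guru {n : ℕ} (s : Fin n → Option (Fin n)) (i : Fin n) : Option (Fin n) :=
  ((fun o => Option.bind o s)^[n] (some i)).bind
    (fun j => if s j = some j then some j else none)

/-- Utility of agent `i` in the pure profile `s`: `u i (g i)` if the guru exists, else `0`. -/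
def pureUtil {n : ℕ} (u : Fin n → Fin n → ℝ) (s : Fin n → Option (Fin n)) (i : Fin n) : ℝ :=
  (guru s i).elim 0 (u i)

/-- A mixed strategy for a single agent: nonnegative, total probability at most one
(the residual probability is abstention). -/
def IsStrat {n : ℕ} (y : Fin n → ℝ) : Prop := (∀ j, 0 ≤ y j) ∧ (∑ j, y j) ≤ 1

/-- A mixed strategy profile. -/
def IsMixed {n : ℕ} (x : Fin n → Fin n → ℝ) : Prop := ∀ i, IsStrat (x i)

/-- Probability that the independent randomization `x` produces the pure profile `s`. -/
def prob {n : ℕ} (x : Fin n → Fin n → ℝ) (s : Fin n → Option (Fin n)) : ℝ :=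
  ∏ i, (s i).elim (1 - ∑ j, x i j) (x i)

/-- Expected utility of agent `i` under the mixed profile `x`. -/
def util {n : ℕ} (u x : Fin n → Fin n → ℝ) (i : Fin n) : ℝ :=
  ∑ s : Fin n → Option (Fin n), prob x s * pureUtil u s i

/-- Expected social welfare of the mixed profile `x`. -/
def SW {n : ℕ} (u x : Fin n → Fin n → ℝ) : ℝ := ∑ i, util u x i

/-- The set of social-welfare values achievable by mixed profiles; `OPT` is its greatest element. -/
def SWvals {n : ℕ} (u : Fin n → Fin n → ℝ) : Set ℝ :=
  {w | ∃ x, IsMixed x ∧ w = SW u x}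

/-- `x` is an `ε`-Nash equilibrium. -/
def EpsNash {n : ℕ} (u : Fin n → Fin n → ℝ) (ε : ℝ) (x : Fin n → Fin n → ℝ) : Prop :=
  ∀ i y, IsStrat y → util u x i ≥ (1 - ε) * util u (Function.update x i y) i

/-- `x` is an (exact, mixed) Nash equilibrium. -/
def NashEq {n : ℕ} (u x : Fin n → Fin n → ℝ) : Prop :=
  ∀ i y, IsStrat y → util u x i ≥ util u (Function.update x i y) i

open MeasureTheory Metric Function
open scoped NNReal Polynomial Topology RealInnerProductSpace

/-!
Fix a pure profile of maximal welfare and require each of its voters to vote with probability at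
least `ε`. The game with these forced votes has an equilibrium `x`. Every deviation becomes
admissible once it is mixed with voting, at a cost of at most an `ε` fraction of its utility, so `x`
is an `ε`-Nash equilibrium of the original game. An agent whose guru in the optimal profile is `j`
could delegate directly to `j`, who votes with probability at least `ε`; hence she gets at least an
`ε` fraction of her utility in that profile.

The utility of an agent is linear in her own strategy, so the equilibrium is a solution of a
variational inequality, found as a fixed point by Brouwer's theorem. The latter follows the argument
of Milnor and Rogers: if `g` is Lipschitz and vanishes outside an open bounded set `s`, then
`x ↦ x + t • g x` maps `s` bijectively onto itself for small `t`, so the integral over `s` of its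
Jacobian determinant, a polynomial in `t`, is constant.
-/

/-! ### Brouwer's fixed point theorem -/

section LipschitzExtension

theorem exists_mem_segment_mem_frontier {E : Type*} [AddCommGroup E] [Module ℝ E]
    [TopologicalSpace E] [IsTopologicalAddGroup E] [ContinuousSMul ℝ E] {s : Set E} {x y : E}
    (hx : x ∈ s) (hy : y ∉ s) : ∃ z ∈ segment ℝ x y, z ∈ frontier s := by
  by_contra! hfr
  have hcover : segment ℝ x y ⊆ interior s ∪ (closure s)ᶜ := fun z hz => by
    by_cases hzs : z ∈ closure s
    · exact Or.inl (by_contra fun hzi => hfr z hz ⟨hzs, hzi⟩)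
    · exact Or.inr hzs
  rcases (convex_segment x y).isPreconnected.subset_or_subset isOpen_interior
    isClosed_closure.isOpen_compl
    (Set.disjoint_compl_right_iff_subset.2 interior_subset_closure) hcover with h | h
  · exact hy (interior_subset (h (right_mem_segment ℝ x y)))
  · exact h (left_mem_segment ℝ x y) (subset_closure hx)

theorem lipschitzWith_indicator_of_frontier_eq_zero {E F : Type*} [NormedAddCommGroup E]
    [NormedSpace ℝ E] [PseudoMetricSpace F] [Zero F] {f : E → F} {s : Set E} {K : ℝ≥0}
    (hs : IsClosed s) (hf : LipschitzOnWith K f s) (h0 : ∀ x ∈ frontier s, f x = 0) :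
    LipschitzWith K (s.indicator f) := by
  have dist_le_of_mem_of_notMem : ∀ x ∈ s, ∀ y ∉ s,
      dist (s.indicator f x) (s.indicator f y) ≤ K * dist x y := fun x hx y hy => by
    obtain ⟨z, hz, hzs⟩ := exists_mem_segment_mem_frontier hx hy
    rw [Set.indicator_of_mem hx, Set.indicator_of_notMem hy, ← h0 z hzs]
    refine (hf.dist_le_mul x hx z (hs.frontier_subset hzs)).trans ?_
    gcongr
    linarith [dist_add_dist_of_mem_segment hz, dist_nonneg (x := z) (y := y)]
  refine LipschitzWith.of_dist_le_mul fun x y => ?_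
  by_cases hx : x ∈ s <;> by_cases hy : y ∈ s
  · simpa only [Set.indicator_of_mem hx, Set.indicator_of_mem hy] using hf.dist_le_mul x hx y hy
  · exact dist_le_of_mem_of_notMem x hx y hy
  · simpa only [dist_comm] using dist_le_of_mem_of_notMem y hy x hx
  · rw [Set.indicator_of_notMem hx, Set.indicator_of_notMem hy, dist_self]
    positivity

end LipschitzExtension

section Perturbation
variable {E : Type*} [NormedAddCommGroup E] [NormedSpace ℝ E] {g : E → E} {K : ℝ≥0}

theorem bijective_id_add_of_lipschitzWith [CompleteSpace E] (hg : LipschitzWith K g) (hK : K < 1) :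
    Function.Bijective fun x => x + g x := by
  have happrox : ApproximatesLinearOn (fun x => x + g x)
      (ContinuousLinearEquiv.refl ℝ E : E →L[ℝ] E) Set.univ K := by
    rw [ApproximatesLinearOn.approximatesLinearOn_iff_lipschitzOnWith, lipschitzOnWith_univ]
    convert hg using 1
    ext x
    simp
  have hsmall : Subsingleton E ∨
      K < ‖((ContinuousLinearEquiv.refl ℝ E).symm : E →L[ℝ] E)‖₊⁻¹ := by
    rcases subsingleton_or_nontrivial E with h | h
    · exact Or.inl h
    · exact Or.inr (by simpa using hK)
  exact ⟨Set.injOn_univ.1 (happrox.injOn hsmall), happrox.surjective hsmall⟩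

theorem image_id_add_of_lipschitzWith [CompleteSpace E] {s : Set E} (hg : LipschitzWith K g)
    (hK : K < 1) (h0 : ∀ x ∉ s, g x = 0) : (fun x => x + g x) '' s = s := by
  have hcompl : (fun x => x + g x) '' sᶜ = sᶜ :=
    (Set.image_congr fun x hx => by simp [h0 x hx]).trans (Set.image_id sᶜ)
  rwa [Set.image_compl_eq (bijective_id_add_of_lipschitzWith hg hK), compl_inj_iff] at hcompl

theorem det_one_add_pos [FiniteDimensional ℝ E] {A : E →L[ℝ] E} (hA : ‖A‖ < 1) :
    0 < (1 + A).det := by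
  have hne : ∀ t ∈ Set.Icc (0 : ℝ) 1, (1 + t • A).det ≠ 0 := fun t ht => by
    have hnorm : ‖-(t • A)‖ < 1 := by
      rw [norm_neg, norm_smul, Real.norm_of_nonneg ht.1]
      exact (mul_le_of_le_one_left (norm_nonneg A) ht.2).trans_lt hA
    have hunit : IsUnit (1 + t • A) := by simpa using isUnit_one_sub_of_norm_lt_one hnorm
    have hunit' : IsUnit ((1 + t • A : E →L[ℝ] E) : E →ₗ[ℝ] E) :=
      hunit.map (ContinuousLinearMap.toLinearMapRingHom : (E →L[ℝ] E) →+* (E →ₗ[ℝ] E))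
    exact (LinearMap.isUnit_det _ hunit').ne_zero
  have hcont : Continuous fun t : ℝ => (1 + t • A).det :=
    ContinuousLinearMap.continuous_det.comp (by fun_prop)
  by_contra! hneg
  obtain ⟨t, ht, h⟩ : (0 : ℝ) ∈ (fun t : ℝ => (1 + t • A).det) '' Set.Icc 0 1 :=
    intermediate_value_Icc' zero_le_one hcont.continuousOn
      ⟨by simpa using hneg, by simp [ContinuousLinearMap.det]⟩
  exact hne t ht h

end Perturbation

section Volume

theorem exists_polynomial_eval_eq_det_one_add_smul {k V : Type*} [Field k] [AddCommGroup V]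
    [Module k V] [FiniteDimensional k V] (A : V →ₗ[k] V) :
    ∃ p : k[X], p.natDegree ≤ Module.finrank k V ∧ ∀ t, p.eval t = (1 + t • A).det := by
  let b := Module.finBasis k V
  let M := LinearMap.toMatrix b b A
  refine ⟨(-M).charpolyRev, ?_, fun t => ?_⟩
  · rw [← Matrix.reverse_charpoly]
    refine (Polynomial.reverse_natDegree_le _).trans_eq ?_
    rw [Matrix.charpoly_natDegree_eq_dim, Fintype.card_fin]
  · rw [← LinearMap.det_toMatrix b, Matrix.charpolyRev, ← Polynomial.coe_evalRingHom,
      RingHom.map_det]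
    congr 1
    ext i j
    have hone : Polynomial.eval t ((1 : Matrix _ _ k[X]) i j) = (1 : Matrix _ _ k) i j := by
      simp only [Matrix.one_apply, apply_ite (Polynomial.eval t), Polynomial.eval_one,
        Polynomial.eval_zero]
    simpa [M, LinearMap.toMatrix_one, hone] using mul_comm _ t

/-- By Lagrange interpolation, the integral at any parameter is a fixed linear combination of the
integrals at parameters in `S`. -/
theorem integral_eval_eq_of_forall_mem {α : Type*} [MeasurableSpace α] {μ : Measure α}
    {p : α → ℝ[X]} {d : ℕ} {S : Set ℝ} {c : ℝ} (hdeg : ∀ x, (p x).natDegree ≤ d) (hS : S.Infinite)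
    (hint : ∀ t ∈ S, Integrable (fun x => (p x).eval t) μ)
    (hc : ∀ t ∈ S, ∫ x, (p x).eval t ∂μ = c) (t : ℝ) : ∫ x, (p x).eval t ∂μ = c := by
  obtain ⟨T, hTS, hT⟩ := hS.exists_subset_card_eq (d + 1)
  let w : ℝ → ℝ := fun a => (Lagrange.basis T id a).eval t
  have hinj : Set.InjOn (id : ℝ → ℝ) T := Function.injective_id.injOn
  have hw : ∑ a ∈ T, w a = 1 := by
    rw [← Polynomial.eval_finsetSum, Lagrange.sum_basis hinj (Finset.card_pos.1 (by lia)),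
      Polynomial.eval_one]
  have hinterp : ∀ x, (p x).eval t = ∑ a ∈ T, w a * (p x).eval a := fun x => by
    have hlt : (p x).degree < #T :=
      Polynomial.degree_le_natDegree.trans_lt
        (Nat.cast_lt.2 (hT ▸ Nat.lt_succ_of_le (hdeg x)))
    conv_lhs => rw [Lagrange.eq_interpolate hinj hlt]
    simp [Lagrange.interpolate_apply, Polynomial.eval_finsetSum, w, mul_comm]
  calc ∫ x, (p x).eval t ∂μ = ∑ a ∈ T, w a * ∫ x, (p x).eval a ∂μ := by
        simp_rw [hinterp]
        rw [integral_finsetSum _ fun a ha => (hint a (hTS ha)).const_mul (w a)]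
        simp_rw [integral_const_mul]
    _ = ∑ a ∈ T, w a * c := Finset.sum_congr rfl fun a ha => by rw [hc a (hTS ha)]
    _ = c := by rw [← Finset.sum_mul, hw, one_mul]

variable {E : Type*} [NormedAddCommGroup E] [NormedSpace ℝ E] [FiniteDimensional ℝ E]
  [MeasurableSpace E] [BorelSpace E] {μ : Measure E} [μ.IsAddHaarMeasure]
  {g : E → E} {K : ℝ≥0} {s : Set E}

theorem integral_det_one_add_fderiv_of_lt_one (hg : LipschitzWith K g) (hK : K < 1)
    (hs : IsOpen s) (hd : ∀ x ∈ s, DifferentiableAt ℝ g x) (h0 : ∀ x ∉ s, g x = 0) :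
    ∫ x in s, (1 + fderiv ℝ g x).det ∂μ = μ.real s := by
  have := FiniteDimensional.complete ℝ E
  have hder : ∀ x ∈ s, HasFDerivWithinAt (fun x => x + g x) (1 + fderiv ℝ g x) s x :=
    fun x hx => ((hasFDerivAt_id x).add (hd x hx).hasFDerivAt).hasFDerivWithinAt
  have hpos : ∀ x, 0 < (1 + fderiv ℝ g x).det := fun x =>
    det_one_add_pos ((norm_fderiv_le_of_lipschitz ℝ hg).trans_lt hK)
  have hchange := integral_image_eq_integral_abs_det_fderiv_smul μ hs.measurableSet hder
    (bijective_id_add_of_lipschitzWith hg hK).injective.injOn fun _ => (1 : ℝ)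
  simpa [image_id_add_of_lipschitzWith hg hK h0, abs_of_pos (hpos _)] using hchange.symm

theorem integrable_det_one_add_smul_fderiv (hg : LipschitzWith K g) (hs : Bornology.IsBounded s)
    (t : ℝ) : IntegrableOn (fun x => (1 + t • fderiv ℝ g x).det) s μ := by
  have hcont : Continuous fun A : E →L[ℝ] E => (1 + t • A).det :=
    ContinuousLinearMap.continuous_det.comp (by fun_prop)
  have := FiniteDimensional.proper ℝ (E →L[ℝ] E)
  obtain ⟨C, hC⟩ := (isCompact_closedBall (0 : E →L[ℝ] E) K).exists_bound_of_continuousOn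
    hcont.continuousOn
  refine Measure.integrableOn_of_bounded (M := C) hs.measure_lt_top.ne
    (hcont.measurable.comp (measurable_fderiv ℝ g)).aestronglyMeasurable ?_
  exact Filter.Eventually.of_forall fun x =>
    hC _ (mem_closedBall_zero_iff.2 (norm_fderiv_le_of_lipschitz ℝ hg))

/-- Both sides are polynomials in `t` once `g` is replaced by `t • g`, and for small `t` the map
`x ↦ x + t • g x` is a bijection of `s`. -/
theorem integral_det_one_add_fderiv (hg : LipschitzWith K g) (hs : IsOpen s)
    (hsb : Bornology.IsBounded s) (hd : ∀ x ∈ s, DifferentiableAt ℝ g x) (h0 : ∀ x ∉ s, g x = 0) :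
    ∫ x in s, (1 + fderiv ℝ g x).det ∂μ = μ.real s := by
  choose p hdeg hp using fun x =>
    exists_polynomial_eval_eq_det_one_add_smul (fderiv ℝ g x : E →ₗ[ℝ] E)
  have heval : ∀ t x, (p x).eval t = (1 + t • fderiv ℝ g x).det := fun t x => hp x t
  have hsmall : ∀ t ∈ Set.Ioo 0 ((K : ℝ) + 1)⁻¹, ∫ x in s, (p x).eval t ∂μ = μ.real s := by
    intro t ht
    have htK : ‖t‖₊ * K < 1 := by
      rw [← NNReal.coe_lt_coe, NNReal.coe_mul, coe_nnnorm, Real.norm_of_nonneg ht.1.le]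
      calc t * K ≤ t * (K + 1) := mul_le_mul_of_nonneg_left (by linarith) ht.1.le
        _ < 1 := (lt_div_iff₀ (by positivity)).1 (by simpa only [one_div] using ht.2)
    have hchange := integral_det_one_add_fderiv_of_lt_one (μ := μ)
      ((lipschitzWith_smul t).comp hg) htK hs (fun x hx => (hd x hx).const_smul t)
      fun x hx => by simp [h0 x hx]
    refine (setIntegral_congr_fun hs.measurableSet fun x hx => ?_).trans hchange
    exact (heval t x).trans
      (congrArg (fun A : E →L[ℝ] E => (1 + A).det) (fderiv_const_smul (hd x hx) t).symm)
  have hint : ∀ t, IntegrableOn (fun x => (p x).eval t) s μ := fun t => by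
    simpa only [heval] using integrable_det_one_add_smul_fderiv hg hsb t
  have h1 := integral_eval_eq_of_forall_mem hdeg (Set.Ioo_infinite (by positivity))
    (fun t _ => hint t) hsmall 1
  simpa only [heval, one_smul] using h1

end Volume

section Retraction
variable {E : Type*} [NormedAddCommGroup E] [InnerProductSpace ℝ E] [FiniteDimensional ℝ E]

theorem det_eq_zero_of_eventually_norm_eq {f : E → E} {A : E →L[ℝ] E} {x : E} {c : ℝ}
    (hf : HasFDerivAt f A x) (hc : c ≠ 0) (hnorm : ∀ᶠ y in 𝓝 x, ‖f y‖ = c) : A.det = 0 := by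
  have horth : ∀ v, inner ℝ (f x) (A v) = 0 := fun v => by
    have hconst : HasFDerivAt (fun y => ‖f y‖ ^ 2) (0 : E →L[ℝ] ℝ) x :=
      (hasFDerivAt_const (c ^ 2) x).congr_of_eventuallyEq (hnorm.mono fun y hy => by simp only [hy])
    simpa using congrArg (fun L : E →L[ℝ] ℝ => L v) (hf.norm_sq.unique hconst)
  by_contra hdet
  have hunit : IsUnit (A : E →ₗ[ℝ] E) :=
    (LinearMap.isUnit_iff_isUnit_det _).2 (isUnit_iff_ne_zero.2 hdet)
  obtain ⟨v, hv⟩ := ((Module.End.isUnit_iff _).1 hunit).2 (f x)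
  have hzero : f x = 0 := inner_self_eq_zero.1 (hv ▸ horth v)
  exact hc (by simpa [hzero] using hnorm.self_of_nhds.symm)

/-- If `r` fixed the sphere, `g x = r x - x` would vanish there, so `∫ det (1 + g')` would be the
volume of the ball; but `1 + g' = r'` is singular because `‖r‖` is constant. -/
theorem exists_mem_sphere_ne_of_mapsTo_sphere {r : E → E} {R : ℝ} (hR : 0 < R)
    (hr : ContDiffOn ℝ 1 r (closedBall 0 R))
    (hmaps : Set.MapsTo r (closedBall 0 R) (sphere 0 R)) : ∃ x ∈ sphere 0 R, r x ≠ x := by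
  by_contra! hid
  borelize E
  let g : E → E := (closedBall 0 R).indicator fun x => r x - x
  have hsub : ContDiffOn ℝ 1 (fun x => r x - x) (closedBall 0 R) := hr.sub contDiffOn_id
  obtain ⟨K, hK⟩ := (hsub.locallyLipschitzOn (convex_closedBall 0 R))
    |>.exists_lipschitzOnWith_of_compact (isCompact_closedBall 0 R)
  have hg : LipschitzWith K g :=
    lipschitzWith_indicator_of_frontier_eq_zero isClosed_closedBall hK fun x hx => by
      rw [frontier_closedBall _ hR.ne'] at hx
      rw [hid x hx, sub_self]
  have hgr : ∀ x ∈ closedBall (0 : E) R, x + g x = r x := fun x hx => by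
    simp [g, Set.indicator_of_mem hx]
  have hgd : ∀ x ∈ ball (0 : E) R, DifferentiableAt ℝ g x := fun x hx => by
    have hnhds : closedBall (0 : E) R ∈ 𝓝 x := closedBall_mem_nhds_of_mem hx
    refine ((hsub.contDiffAt hnhds).differentiableAt one_ne_zero).congr_of_eventuallyEq ?_
    filter_upwards [hnhds] with y hy using Set.indicator_of_mem hy _
  have hg0 : ∀ x ∉ ball (0 : E) R, g x = 0 := fun x hx => by
    by_cases hxR : x ∈ closedBall (0 : E) R
    · have hxs : x ∈ sphere (0 : E) R := by
        simpa using le_antisymm (mem_closedBall.1 hxR) (not_lt.1 (mt mem_ball.2 hx))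
      simpa [hid x hxs] using hgr x hxR
    · exact Set.indicator_of_notMem hxR _
  have hdet : ∀ x ∈ ball (0 : E) R, (1 + fderiv ℝ g x).det = 0 := fun x hx => by
    refine det_eq_zero_of_eventually_norm_eq ((hasFDerivAt_id x).add (hgd x hx).hasFDerivAt)
      hR.ne' ?_
    filter_upwards [closedBall_mem_nhds_of_mem hx] with y hy
    simpa [hgr y hy] using hmaps hy
  have hvol : volume.real (ball (0 : E) R) = 0 := by
    rw [← integral_det_one_add_fderiv hg isOpen_ball isBounded_ball hgd hg0,
      setIntegral_eq_zero_of_forall_eq_zero hdet]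
  exact hvol.not_gt (ENNReal.toReal_pos (measure_ball_pos volume 0 hR).ne' measure_ball_lt_top.ne)

end Retraction

section ExitTime
variable {E : Type*} [NormedAddCommGroup E] [InnerProductSpace ℝ E] {R : ℝ} {x y d : E}

/-- A quarter of the discriminant of the quadratic equation `‖x + t • d‖ ^ 2 = R ^ 2` in `t`. -/
noncomputable def exitDiscrim (R : ℝ) (x d : E) : ℝ :=
  ⟪x, d⟫ ^ 2 + ‖d‖ ^ 2 * (R ^ 2 - ‖x‖ ^ 2)

/-- The time `t` at which the ray `x + t • d` leaves the ball of radius `R` about the origin: the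
larger root of `‖x + t • d‖ ^ 2 = R ^ 2`. -/
noncomputable def exitTime (R : ℝ) (x d : E) : ℝ :=
  (-⟪x, d⟫ + √(exitDiscrim R x d)) / ‖d‖ ^ 2

theorem exitDiscrim_nonneg (hx : ‖x‖ ≤ R) : 0 ≤ exitDiscrim R x d := by
  have hsq : ‖x‖ ^ 2 ≤ R ^ 2 := by gcongr
  exact add_nonneg (sq_nonneg _) (mul_nonneg (sq_nonneg _) (sub_nonneg.2 hsq))

theorem norm_add_exitTime_smul (hx : ‖x‖ ≤ R) (hd : d ≠ 0) : ‖x + exitTime R x d • d‖ = R := by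
  have hd' : ‖d‖ ^ 2 ≠ 0 := pow_ne_zero 2 (norm_ne_zero_iff.2 hd)
  have htime : exitTime R x d * ‖d‖ ^ 2 + ⟪x, d⟫ = √(exitDiscrim R x d) := by
    rw [exitTime, div_mul_cancel₀ _ hd']
    ring
  have hroot : (exitTime R x d * ‖d‖ ^ 2 + ⟪x, d⟫) ^ 2 =
      ⟪x, d⟫ ^ 2 + ‖d‖ ^ 2 * (R ^ 2 - ‖x‖ ^ 2) := by
    rw [htime, Real.sq_sqrt (exitDiscrim_nonneg hx), exitDiscrim]
  rw [← sq_eq_sq₀ (norm_nonneg _) ((norm_nonneg x).trans hx), norm_add_sq_real, inner_smul_right,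
    norm_smul, mul_pow, Real.norm_eq_abs, sq_abs]
  refine mul_left_cancel₀ hd' ?_
  linear_combination hroot

theorem exitTime_eq_zero (hx : ‖x‖ = R) (hd : 0 ≤ ⟪x, d⟫) : exitTime R x d = 0 := by
  simp [exitTime, exitDiscrim, hx, Real.sqrt_sq hd]

theorem real_inner_sub_pos_of_norm_le (hyx : ‖y‖ ≤ ‖x‖) (hne : x ≠ y) : 0 < ⟪x, x - y⟫ := by
  have hexpand := norm_sub_sq_real x y
  have hsq : ‖y‖ ^ 2 ≤ ‖x‖ ^ 2 := by gcongr
  have hpos : 0 < ‖x - y‖ ^ 2 := pow_pos (norm_pos_iff.2 (sub_ne_zero.2 hne)) 2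
  rw [inner_sub_right, real_inner_self_eq_norm_sq]
  linarith

theorem exitDiscrim_sub_pos (hx : ‖x‖ ≤ R) (hy : ‖y‖ ≤ R) (hne : x ≠ y) :
    0 < exitDiscrim R x (x - y) := by
  rcases hx.eq_or_lt with hxR | hxR
  · simpa [exitDiscrim, hxR] using
      pow_pos (real_inner_sub_pos_of_norm_le (hxR ▸ hy) hne) 2
  · have hd : 0 < ‖x - y‖ := norm_pos_iff.2 (sub_ne_zero.2 hne)
    have hsq : ‖x‖ ^ 2 < R ^ 2 := by gcongr
    exact add_pos_of_nonneg_of_pos (sq_nonneg _) (mul_pos (pow_pos hd 2) (sub_pos.2 hsq))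

theorem contDiffOn_exitTime {s : Set E} {v : E → E} {n : WithTop ℕ∞} (hv : ContDiffOn ℝ n v s)
    (hne : ∀ x ∈ s, v x ≠ 0) (hpos : ∀ x ∈ s, 0 < exitDiscrim R x (v x)) :
    ContDiffOn ℝ n (fun x => exitTime R x (v x)) s := by
  have hinner : ContDiffOn ℝ n (fun x => ⟪x, v x⟫) s := contDiffOn_id.inner ℝ hv
  have hdiscrim : ContDiffOn ℝ n (fun x => exitDiscrim R x (v x)) s :=
    (hinner.pow 2).add ((hv.norm_sq ℝ).mul (contDiffOn_const.sub (contDiffOn_id.norm_sq ℝ)))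
  exact (hinner.neg.add (hdiscrim.sqrt fun x hx => (hpos x hx).ne')).div (hv.norm_sq ℝ)
    fun x hx => pow_ne_zero 2 (norm_ne_zero_iff.2 (hne x hx))

end ExitTime

section FixedPoint
variable {E : Type*} [NormedAddCommGroup E] [InnerProductSpace ℝ E] [FiniteDimensional ℝ E]

/-- Without a fixed point, sending `x` to the point where the ray from `f x` through `x` leaves the
ball would be a `C¹` retraction onto the sphere. -/
theorem exists_isFixedPt_of_contDiffOn_closedBall {f : E → E} {R : ℝ} (hR : 0 < R)
    (hf : ContDiffOn ℝ 1 f (closedBall 0 R))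
    (hmaps : Set.MapsTo f (closedBall 0 R) (closedBall 0 R)) :
    ∃ x ∈ closedBall 0 R, IsFixedPt f x := by
  by_contra! hfix
  have hne : ∀ x ∈ closedBall 0 R, x ≠ f x := fun x hx h => hfix x hx h.symm
  have hnorm : ∀ x ∈ closedBall 0 R, ‖x‖ ≤ R ∧ ‖f x‖ ≤ R := fun x hx =>
    ⟨mem_closedBall_zero_iff.1 hx, mem_closedBall_zero_iff.1 (hmaps hx)⟩
  have hdir : ContDiffOn ℝ 1 (fun x => x - f x) (closedBall 0 R) := contDiffOn_id.sub hf
  have hsmooth : ContDiffOn ℝ 1 (fun x => x + exitTime R x (x - f x) • (x - f x))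
      (closedBall 0 R) :=
    contDiffOn_id.add <| (contDiffOn_exitTime hdir (fun x hx => sub_ne_zero.2 (hne x hx))
      fun x hx => exitDiscrim_sub_pos (hnorm x hx).1 (hnorm x hx).2 (hne x hx)).smul hdir
  obtain ⟨x, hx, hxne⟩ := exists_mem_sphere_ne_of_mapsTo_sphere hR hsmooth fun x hx =>
    mem_sphere_zero_iff_norm.2
      (norm_add_exitTime_smul (hnorm x hx).1 (sub_ne_zero.2 (hne x hx)))
  have hxb := sphere_subset_closedBall hx
  have hxR : ‖x‖ = R := mem_sphere_zero_iff_norm.1 hx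
  refine hxne ?_
  rw [exitTime_eq_zero hxR, zero_smul, add_zero]
  exact (real_inner_sub_pos_of_norm_le (hxR ▸ (hnorm x hxb).2) (hne x hxb)).le

theorem exists_isFixedPt_of_isCompact_of_forall_dist_le {X : Type*} [MetricSpace X]
    {s : Set X} {f : X → X} (hs : IsCompact s) (hf : ContinuousOn f s)
    (happrox : ∀ η > 0, ∃ x ∈ s, dist (f x) x ≤ η) : ∃ x ∈ s, IsFixedPt f x := by
  obtain ⟨y, hy, -⟩ := happrox 1 one_pos
  obtain ⟨x, hx, hmin⟩ := hs.exists_isMinOn ⟨y, hy⟩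
    (continuous_dist.comp_continuousOn (ContinuousOn.prodMk hf continuousOn_id))
  refine ⟨x, hx, dist_le_zero.1 (le_of_forall_pos_le_add fun η hη => ?_)⟩
  obtain ⟨z, hz, hzη⟩ := happrox η hη
  rw [zero_add]
  exact (hmin hz).trans hzη

theorem exists_isFixedPt_of_norm_le {f : E → E} {R : ℝ} (hf : Continuous f)
    (hb : ∀ x, ‖f x‖ ≤ R) : ∃ x, IsFixedPt f x := by
  have hR : 0 < R + 1 := by linarith [(norm_nonneg _).trans (hb 0)]
  obtain ⟨x, -, hx⟩ := exists_isFixedPt_of_isCompact_of_forall_dist_le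
    (isCompact_closedBall (0 : E) (R + 1)) hf.continuousOn fun η hη => by
      obtain ⟨g, hg, hgf, -⟩ := hf.exists_contDiff_approx 1 (ε := fun _ => min η 1)
        continuous_const fun _ => lt_min hη one_pos
      have hgR : ∀ x, ‖g x‖ ≤ R + 1 := fun x => by
        have hle := norm_le_norm_add_norm_sub (f x) (g x)
        rw [← dist_eq_norm, dist_comm] at hle
        linarith [hb x, (hgf x).le.trans (min_le_right η 1)]
      obtain ⟨x, hxR, hx⟩ := exists_isFixedPt_of_contDiffOn_closedBall hR hg.contDiffOn
        fun x _ => mem_closedBall_zero_iff.2 (hgR x)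
      refine ⟨x, hxR, ?_⟩
      have hclose := (hgf x).le.trans (min_le_left η 1)
      rwa [hx.eq, dist_comm] at hclose
  exact ⟨x, hx⟩

end FixedPoint

section Projection
variable {E : Type*} [NormedAddCommGroup E] [InnerProductSpace ℝ E] {K : Set E}

theorem exists_lipschitzWith_projection (hK : IsComplete K) (hconv : Convex ℝ K)
    (hne : K.Nonempty) :
    ∃ P : E → E, LipschitzWith 1 P ∧ ∀ x, P x ∈ K ∧ ∀ y ∈ K, ⟪x - P x, y - P x⟫ ≤ 0 := by
  choose P hPK hPmin using fun x => exists_norm_eq_iInf_of_complete_convex hne hK hconv x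
  have hP : ∀ x, ∀ y ∈ K, ⟪x - P x, y - P x⟫ ≤ 0 := fun x =>
    (norm_eq_iInf_iff_real_inner_le_zero hconv (hPK x)).1 (hPmin x)
  refine ⟨P, LipschitzWith.of_dist_le_mul fun x y => ?_, fun x => ⟨hPK x, hP x⟩⟩
  have hsq : ‖P x - P y‖ * ‖P x - P y‖ ≤ ‖x - y‖ * ‖P x - P y‖ :=
    calc ‖P x - P y‖ * ‖P x - P y‖ = ⟪P x - P y, P x - P y⟫ :=
          (real_inner_self_eq_norm_mul_norm _).symm
      _ = ⟪x - y, P x - P y⟫ + (⟪x - P x, P y - P x⟫ + ⟪y - P y, P x - P y⟫) := by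
          simp only [inner_sub_left, inner_sub_right]
          ring
      _ ≤ ⟪x - y, P x - P y⟫ + 0 := by
          gcongr
          exact add_nonpos (hP x _ (hPK y)) (hP y _ (hPK x))
      _ ≤ ‖x - y‖ * ‖P x - P y‖ := by
          rw [add_zero]
          exact real_inner_le_norm _ _
  rw [NNReal.coe_one, one_mul, dist_eq_norm, dist_eq_norm]
  rcases (norm_nonneg (P x - P y)).eq_or_lt with hzero | hpos
  · exact hzero ▸ norm_nonneg _
  · exact le_of_mul_le_mul_right hsq hpos

/-- If `P` is the nearest-point projection onto `K` and `x` is a fixed point of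
`x ↦ P x + F (P x)`, then `F (P x) = x - P x` makes an obtuse angle with `K` at `P x`. -/
theorem exists_forall_inner_sub_le_zero [FiniteDimensional ℝ E] {F : E → E} (hK : IsCompact K)
    (hconv : Convex ℝ K) (hne : K.Nonempty) (hF : ContinuousOn F K) :
    ∃ z ∈ K, ∀ y ∈ K, ⟪F z, y - z⟫ ≤ 0 := by
  obtain ⟨P, hPlip, hP⟩ := exists_lipschitzWith_projection hK.isComplete hconv hne
  have hPK : ∀ x, P x ∈ K := fun x => (hP x).1
  obtain ⟨R, hR⟩ := hK.exists_bound_of_continuousOn (continuousOn_id.add hF)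
  obtain ⟨x, hx⟩ := exists_isFixedPt_of_norm_le
    (hPlip.continuous.add (hF.comp_continuous hPlip.continuous hPK)) fun x => hR _ (hPK x)
  refine ⟨P x, hPK x, fun y hy => ?_⟩
  have hFx : F (P x) = x - P x := eq_sub_of_add_eq' hx.eq
  exact hFx ▸ (hP x).2 y hy

end Projection

/-! ### Equilibria of games with own-linear utilities -/

section VariationalInequality
variable {V : Type*} [AddCommGroup V] [Module ℝ V] [TopologicalSpace V] [IsTopologicalAddGroup V]
  [ContinuousSMul ℝ V] [T2Space V] [FiniteDimensional ℝ V]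

theorem exists_forall_dual_apply_le {K : Set V} {F : V → Module.Dual ℝ V} (hK : IsCompact K)
    (hconv : Convex ℝ K) (hne : K.Nonempty) (hF : ∀ y, ContinuousOn (fun z => F z y) K) :
    ∃ z ∈ K, ∀ y ∈ K, F z y ≤ F z z := by
  let e : V ≃L[ℝ] EuclideanSpace ℝ (Fin (Module.finrank ℝ V)) := toEuclidean
  let b := EuclideanSpace.basisFun (Fin (Module.finrank ℝ V)) ℝ
  let G : EuclideanSpace ℝ (Fin (Module.finrank ℝ V)) → EuclideanSpace ℝ _ :=
    fun w => WithLp.toLp 2 fun k => F (e.symm w) (e.symm (b k))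
  have hG : ∀ z y, ⟪G (e z), e y⟫ = F z y := fun z y => by
    have hy : y = ∑ k, e y k • e.symm (b k) := by
      rw [← e.symm_apply_apply y]
      conv_lhs => rw [← b.sum_repr (e y), map_sum]
      simp [b]
    rw [PiLp.inner_apply]
    conv_rhs => rw [hy, map_sum]
    simp [G]
  have hGcont : ContinuousOn G (e '' K) := by
    refine (PiLp.continuous_toLp 2 _).comp_continuousOn (continuousOn_pi.2 fun k => ?_)
    refine (hF (e.symm (b k))).comp e.symm.continuous.continuousOn ?_
    rintro _ ⟨z, hz, rfl⟩
    simpa using hz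
  have hconv' : Convex ℝ (e '' K) := hconv.linear_image e.toLinearMap
  obtain ⟨_, ⟨z, hz, rfl⟩, hmax⟩ :=
    exists_forall_inner_sub_le_zero (hK.image e.continuous) hconv' (hne.image e) hGcont
  refine ⟨z, hz, fun y hy => ?_⟩
  have hle := hmax (e y) ⟨y, hy, rfl⟩
  rwa [← map_sub, hG, map_sub, sub_nonpos] at hle

end VariationalInequality

section NashEquilibrium
variable {ι : Type*} [Finite ι] [DecidableEq ι] {V : ι → Type*} [∀ i, AddCommGroup (V i)]
  [∀ i, Module ℝ (V i)] [∀ i, TopologicalSpace (V i)] [∀ i, IsTopologicalAddGroup (V i)]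
  [∀ i, ContinuousSMul ℝ (V i)] [∀ i, T2Space (V i)] [∀ i, FiniteDimensional ℝ (V i)]

theorem exists_forall_update_le {K : ∀ i, Set (V i)} {U : ι → (∀ i, V i) → ℝ}
    (hK : ∀ i, IsCompact (K i)) (hconv : ∀ i, Convex ℝ (K i)) (hne : ∀ i, (K i).Nonempty)
    (hU : ∀ i, Continuous (U i)) (hlin : ∀ i z, IsLinearMap ℝ fun y => U i (update z i y)) :
    ∃ z, ∀ i, z i ∈ K i ∧ ∀ y ∈ K i, U i (update z i y) ≤ U i z := by
  have := Fintype.ofFinite ι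
  let F : (∀ i, V i) → Module.Dual ℝ (∀ i, V i) :=
    fun z => ∑ i, (hlin i z).mk' ∘ₗ LinearMap.proj i
  have hF : ∀ z y, F z y = ∑ i, U i (update z i (y i)) := fun z y => by simp [F]
  have hFcont : ∀ y, Continuous fun z => F z y := fun y => by
    simp only [hF]
    fun_prop
  obtain ⟨z, hz, hmax⟩ := exists_forall_dual_apply_le (isCompact_univ_pi hK)
    (convex_pi fun i _ => hconv i) (Set.univ_pi_nonempty_iff.2 hne)
    fun y => (hFcont y).continuousOn
  refine ⟨z, fun i => ⟨hz i trivial, fun y hy => ?_⟩⟩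
  have hdev : update z i y ∈ Set.univ.pi K := (Set.update_mem_pi_iff_of_mem hz).2 fun _ => hy
  have hle := hmax _ hdev
  rw [hF, hF] at hle
  by_contra! hlt
  refine hle.not_gt (Finset.sum_lt_sum (fun j _ => ?_) ⟨i, mem_univ i, by simpa using hlt⟩)
  rcases eq_or_ne j i with rfl | hj
  · simpa using hlt.le
  · simp [hj]

end NashEquilibrium

/-! ### The delegation game -/

section DelegationGame
variable {n : ℕ} {s : Fin n → Option (Fin n)} {i j : Fin n} {u x : Fin n → Fin n → ℝ}
  {y : Fin n → ℝ}

theorem guru_eq_bind (s : Fin n → Option (Fin n)) (i : Fin n) :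
    guru s i = ((fun o => Option.bind o s)^[n - 1] (s i)).bind
      fun j => if s j = some j then some j else none := by
  obtain ⟨m, rfl⟩ := Nat.exists_eq_succ_of_ne_zero i.pos.ne'
  rw [guru, iterate_succ_apply, Option.bind_some, Nat.succ_sub_one]

theorem guru_of_delegate (hi : s i = some j) (hj : s j = some j) : guru s i = some j := by
  rw [guru_eq_bind, hi, iterate_fixed (by simp [hj]), Option.bind_some, if_pos hj]

theorem guru_of_abstain (hi : s i = none) : guru s i = none := by
  rw [guru_eq_bind, hi, iterate_fixed (by simp), Option.bind_none]

theorem votes_of_guru (h : guru s i = some j) : s j = some j := by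
  obtain ⟨k, -, hk⟩ := Option.bind_eq_some_iff.1 h
  grind

theorem pureUtil_of_delegate (hi : s i = some j) (hj : s j = some j) : pureUtil u s i = u i j := by
  rw [pureUtil, guru_of_delegate hi hj, Option.elim_some]

theorem pureUtil_of_abstain (hi : s i = none) : pureUtil u s i = 0 := by
  rw [pureUtil, guru_of_abstain hi, Option.elim_none]

theorem pureUtil_nonneg (hu : ∀ i j, 0 ≤ u i j) (s : Fin n → Option (Fin n)) (i : Fin n) :
    0 ≤ pureUtil u s i := by
  rw [pureUtil]
  cases guru s i with
  | none => exact le_rfl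
  | some j => exact hu i j

theorem isStrat_single (j : Fin n) : IsStrat (Pi.single j 1 : Fin n → ℝ) :=
  ⟨(Pi.single_nonneg.2 zero_le_one : (0 : Fin n → ℝ) ≤ Pi.single j 1), by simp⟩

theorem IsMixed.update (hx : IsMixed x) (hy : IsStrat y) : IsMixed (update x i y) :=
  forall_update_iff x (fun _ => IsStrat) |>.2 ⟨hy, fun k _ => hx k⟩

theorem prob_nonneg (hx : IsMixed x) (s : Fin n → Option (Fin n)) : 0 ≤ prob x s := by
  refine Finset.prod_nonneg fun i _ => ?_
  cases s i with
  | none => exact sub_nonneg.2 (hx i).2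
  | some j => exact (hx i).1 j

theorem prob_update (x : Fin n → Fin n → ℝ) (i : Fin n) (y : Fin n → ℝ)
    (s : Fin n → Option (Fin n)) :
    prob (update x i y) s = (s i).elim (1 - ∑ j, y j) y *
      ∏ k ∈ univ.erase i, (s k).elim (1 - ∑ j, x k j) (x k) := by
  rw [prob, ← Finset.mul_prod_erase _ _ (Finset.mem_univ i), update_self]
  congr 1
  exact Finset.prod_congr rfl fun k hk => by rw [update_of_ne (Finset.ne_of_mem_erase hk)]

theorem prob_eq_zero_of_single (hi : x i = Pi.single j 1) (hs : s i ≠ some j) : prob x s = 0 := by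
  refine Finset.prod_eq_zero (Finset.mem_univ i) ?_
  rw [hi]
  cases h : s i with
  | none => simp
  | some k => exact Pi.single_eq_of_ne (fun hk => hs (by rw [h, hk])) 1

theorem sum_prob_piFinset (x : Fin n → Fin n → ℝ) (A : Fin n → Finset (Option (Fin n))) :
    ∑ s ∈ Fintype.piFinset A, prob x s = ∏ i, ∑ o ∈ A i, o.elim (1 - ∑ j, x i j) (x i) :=
  (Finset.prod_univ_sum A fun i o => o.elim (1 - ∑ j, x i j) (x i)).symm

theorem sum_choice_prob (y : Fin n → ℝ) : ∑ o : Option (Fin n), o.elim (1 - ∑ j, y j) y = 1 := by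
  simp [Fintype.sum_option]

theorem sum_prob (x : Fin n → Fin n → ℝ) : ∑ s, prob x s = 1 := by
  rw [← Fintype.piFinset_univ, sum_prob_piFinset]
  exact Finset.prod_eq_one fun i _ => sum_choice_prob (x i)

theorem sum_prob_filter_eq (x : Fin n → Fin n → ℝ) (i j : Fin n) :
    ∑ s with s i = some j, prob x s = x i j := by
  let A := update (fun _ : Fin n => (univ : Finset (Option (Fin n)))) i {some j}
  have hfilter : univ.filter (fun s : Fin n → Option (Fin n) => s i = some j) =
      Fintype.piFinset A := by
    ext s
    simp [A, Fintype.mem_piFinset,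
      forall_update_iff _ fun k (B : Finset (Option (Fin n))) => s k ∈ B]
  rw [hfilter, sum_prob_piFinset, Finset.prod_eq_single i]
  · simp [A]
  · exact fun k _ hk => by rw [show A k = univ from update_of_ne hk _ _, sum_choice_prob]
  · exact fun h => absurd (Finset.mem_univ i) h

theorem util_nonneg (hu : ∀ i j, 0 ≤ u i j) (hx : IsMixed x) (i : Fin n) : 0 ≤ util u x i :=
  Finset.sum_nonneg fun s _ => mul_nonneg (prob_nonneg hx s) (pureUtil_nonneg hu s i)

/-- There is no constant term because abstaining is worth `0`. -/
theorem isLinearMap_util_update (u x : Fin n → Fin n → ℝ) (i : Fin n) :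
    IsLinearMap ℝ fun y => util u (update x i y) i := by
  have hterm : ∀ y s, prob (update x i y) s * pureUtil u s i = (s i).elim 0 y *
      ((∏ k ∈ univ.erase i, (s k).elim (1 - ∑ j, x k j) (x k)) * pureUtil u s i) := fun y s => by
    rw [prob_update, mul_assoc]
    cases h : s i with
    | none => simp [pureUtil_of_abstain h]
    | some j => simp
  constructor
  · intro y z
    simp only [util, hterm, ← Finset.sum_add_distrib, ← add_mul]
    exact Finset.sum_congr rfl fun s _ => by cases s i <;> simp
  · intro c y
    simp only [util, hterm, Finset.smul_sum, ← smul_mul_assoc]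
    exact Finset.sum_congr rfl fun s _ => by cases s i <;> simp

theorem continuous_util (u : Fin n → Fin n → ℝ) (i : Fin n) : Continuous fun x => util u x i := by
  refine continuous_finsetSum _ fun s _ => Continuous.mul ?_ continuous_const
  refine continuous_finsetProd _ fun k _ => ?_
  cases s k <;> simp only [Option.elim] <;> fun_prop

theorem mul_le_util_of_single (hu : ∀ i j, 0 ≤ u i j) (hx : IsMixed x)
    (hi : x i = Pi.single j 1) : x j j * u i j ≤ util u x i := by
  have hterm : ∀ s, s j = some j → prob x s * u i j = prob x s * pureUtil u s i := fun s hj => by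
    by_cases hs : s i = some j
    · rw [pureUtil_of_delegate hs hj]
    · simp only [prob_eq_zero_of_single hi hs, zero_mul]
  calc x j j * u i j = ∑ s with s j = some j, prob x s * pureUtil u s i := by
        rw [← sum_prob_filter_eq x j j, Finset.sum_mul]
        exact Finset.sum_congr rfl fun s hs => hterm s (Finset.mem_filter.1 hs).2
    _ ≤ util u x i :=
        Finset.sum_le_univ_sum_of_nonneg fun s =>
          mul_nonneg (prob_nonneg hx s) (pureUtil_nonneg hu s i)

theorem SW_eq_sum_prob_mul (u x : Fin n → Fin n → ℝ) :
    SW u x = ∑ s, prob x s * ∑ i, pureUtil u s i := by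
  simp only [SW, util, Finset.mul_sum]
  exact Finset.sum_comm

theorem exists_forall_SW_le_sum_pureUtil (u : Fin n → Fin n → ℝ) :
    ∃ s, ∀ x, IsMixed x → SW u x ≤ ∑ i, pureUtil u s i := by
  obtain ⟨s, hs⟩ := Finite.exists_max fun s => ∑ i, pureUtil u s i
  refine ⟨s, fun x hx => ?_⟩
  calc SW u x ≤ ∑ t, prob x t * ∑ i, pureUtil u s i := by
        rw [SW_eq_sum_prob_mul]
        exact Finset.sum_le_sum fun t _ => mul_le_mul_of_nonneg_left (hs t) (prob_nonneg hx t)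
    _ = ∑ i, pureUtil u s i := by rw [← Finset.sum_mul, sum_prob, one_mul]

end DelegationGame

/-! ### Forced voting -/

section ForcedVoting
variable {n : ℕ} {u x : Fin n → Fin n → ℝ} {p : Fin n → ℝ} {i j : Fin n}

/-- The strategies of an agent `i` who must vote herself with probability at least `q`. -/
def forcedStrats (i : Fin n) (q : ℝ) : Set (Fin n → ℝ) := {y | IsStrat y ∧ q ≤ y i}

theorem convex_forcedStrats (i : Fin n) (q : ℝ) : Convex ℝ (forcedStrats i q) := by
  rintro y ⟨⟨hy0, hy1⟩, hyi⟩ z ⟨⟨hz0, hz1⟩, hzi⟩ a b ha hb hab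
  refine ⟨⟨fun j => ?_, ?_⟩, ?_⟩
  · exact add_nonneg (mul_nonneg ha (hy0 j)) (mul_nonneg hb (hz0 j))
  · simp only [Pi.add_apply, Pi.smul_apply, smul_eq_mul, Finset.sum_add_distrib, ← Finset.mul_sum]
    exact convex_Iic (1 : ℝ) hy1 hz1 ha hb hab
  · exact convex_Ici q hyi hzi ha hb hab

theorem isCompact_forcedStrats (i : Fin n) (q : ℝ) : IsCompact (forcedStrats i q) := by
  refine (isCompact_Icc (a := (0 : Fin n → ℝ)) (b := 1)).of_isClosed_subset ?_ ?_
  · simp only [forcedStrats, IsStrat, Set.ofPred_and, Set.ofPred_forall]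
    refine ((isClosed_iInter fun j => ?_).inter ?_).inter ?_ <;>
      exact isClosed_le (by fun_prop) (by fun_prop)
  · rintro y ⟨⟨hy0, hy1⟩, -⟩
    exact ⟨hy0, fun j => (Finset.single_le_sum (fun k _ => hy0 k) (Finset.mem_univ j)).trans hy1⟩

/-- Equilibrium of the game in which each agent `i` must vote herself with probability at least
`p i`. -/
def IsForcedEquilibrium (u : Fin n → Fin n → ℝ) (p : Fin n → ℝ) (x : Fin n → Fin n → ℝ) : Prop :=
  ∀ i, x i ∈ forcedStrats i (p i) ∧
    ∀ y ∈ forcedStrats i (p i), util u (update x i y) i ≤ util u x i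

theorem exists_isForcedEquilibrium (u : Fin n → Fin n → ℝ) (hp : ∀ i, p i ≤ 1) :
    ∃ x, IsForcedEquilibrium u p x :=
  exists_forall_update_le (fun i => isCompact_forcedStrats i (p i))
    (fun i => convex_forcedStrats i (p i))
    (fun i => ⟨Pi.single i 1, isStrat_single i, by simpa using hp i⟩) (continuous_util u)
    fun i x => isLinearMap_util_update u x i

namespace IsForcedEquilibrium

theorem isMixed (h : IsForcedEquilibrium u p x) : IsMixed x := fun i => (h i).1.1

/-- Agent `i` may deviate to voting with probability `p i` and playing `y` otherwise. -/
theorem epsNash {ε : ℝ} (h : IsForcedEquilibrium u p x) (hu : ∀ i j, 0 ≤ u i j)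
    (hp : ∀ i, p i ∈ Set.Icc 0 ε) (hε : ε ≤ 1) : EpsNash u ε x := by
  intro i y hy
  have hp0 : 0 ≤ p i := (hp i).1
  have hp1 : 0 ≤ 1 - p i := sub_nonneg.2 ((hp i).2.trans hε)
  have hlin := isLinearMap_util_update u x i
  have hmem : p i • Pi.single i 1 + (1 - p i) • y ∈ forcedStrats i (p i) :=
    ⟨((convex_forcedStrats i 0) ⟨isStrat_single i, (isStrat_single i).1 i⟩ ⟨hy, hy.1 i⟩
      hp0 hp1 (add_sub_cancel _ _)).1, by simpa using mul_nonneg hp1 (hy.1 i)⟩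
  calc (1 - ε) * util u (update x i y) i ≤ (1 - p i) * util u (update x i y) i := by
        gcongr
        · exact util_nonneg hu (h.isMixed.update hy) i
        · exact (hp i).2
    _ ≤ p i * util u (update x i (Pi.single i 1)) i + (1 - p i) * util u (update x i y) i :=
        le_add_of_nonneg_left
          (mul_nonneg hp0 (util_nonneg hu (h.isMixed.update (isStrat_single i)) i))
    _ = util u (update x i (p i • Pi.single i 1 + (1 - p i) • y)) i := by
        rw [hlin.map_add, hlin.map_smul, hlin.map_smul, smul_eq_mul, smul_eq_mul]
    _ ≤ util u x i := (h i).2 _ hmem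

theorem mul_le_util (h : IsForcedEquilibrium u p x) (hu : ∀ i j, 0 ≤ u i j) (hp : p j ≤ 1)
    (hij : i = j ∨ p i = 0) : p j * u i j ≤ util u x i := by
  let x' := update x i (Pi.single j 1)
  have hmem : Pi.single j 1 ∈ forcedStrats i (p i) := by
    refine ⟨isStrat_single j, ?_⟩
    rcases hij with rfl | hi
    · simpa using hp
    · exact hi.trans_le ((isStrat_single j).1 i)
  have hvote : p j ≤ x' j j := by
    rcases eq_or_ne j i with rfl | hji
    · simpa [x'] using hp
    · simpa [x', hji] using (h j).1.2
  calc p j * u i j ≤ x' j j * u i j := mul_le_mul_of_nonneg_right hvote (hu i j)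
    _ ≤ util u x' i :=
        mul_le_util_of_single hu (h.isMixed.update (isStrat_single j)) (update_self ..)
    _ ≤ util u x i := (h i).2 _ hmem

theorem mul_sum_pureUtil_le_SW {ε : ℝ} {s : Fin n → Option (Fin n)}
    (h : IsForcedEquilibrium u (fun i => if s i = some i then ε else 0) x)
    (hu : ∀ i j, 0 ≤ u i j) (hε : ε ≤ 1) : ε * ∑ i, pureUtil u s i ≤ SW u x := by
  rw [Finset.mul_sum]
  refine Finset.sum_le_sum fun i _ => ?_
  cases hg : guru s i with
  | none => simpa [pureUtil, hg] using util_nonneg hu h.isMixed i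
  | some j =>
    have hj : s j = some j := votes_of_guru hg
    have hij : i = j ∨ (if s i = some i then ε else 0) = 0 := by
      by_cases hi : s i = some i
      · exact Or.inl (Option.some.inj ((guru_of_delegate hi hi).symm.trans hg))
      · exact Or.inr (if_neg hi)
    simpa [pureUtil, hg, hj] using h.mul_le_util hu (by simpa [hj] using hε) hij

end IsForcedEquilibrium

end ForcedVoting

theorem stmt9_general {n : ℕ} {ε : ℝ} (hε : ε ∈ Set.Icc 0 1) {u : Fin n → Fin n → ℝ}
    (hu : ∀ i j, 0 ≤ u i j) :
    ∃ x, IsMixed x ∧ EpsNash u ε x ∧ ∀ y, IsMixed y → ε * SW u y ≤ SW u x := by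
  obtain ⟨s, hs⟩ := exists_forall_SW_le_sum_pureUtil u
  have hp : ∀ i, (if s i = some i then ε else 0) ∈ Set.Icc 0 ε := fun i => by
    split_ifs
    · exact ⟨hε.1, le_rfl⟩
    · exact ⟨le_rfl, hε.1⟩
  obtain ⟨x, hx⟩ := exists_isForcedEquilibrium u fun i => (hp i).2.trans hε.2
  refine ⟨x, hx.isMixed, hx.epsNash hu hp hε.2, fun y hy => ?_⟩
  exact (mul_le_mul_of_nonneg_left (hs y hy) hε.1).trans (hx.mul_sum_pureUtil_le_SW hu hε.2)

/-- Main theorem: for every ε ∈ [0,1] and every liquid democracy game there exists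
an ε-Nash equilibrium x with SW(x) ≥ ε · OPT. -/
theorem stmt9 {n : ℕ} (ε : ℝ) (hε : ε ∈ Set.Icc (0:ℝ) 1)
    (u : Fin n → Fin n → ℝ) (hu : ∀ i j, 0 ≤ u i j ∧ u i j ≤ 1)
    (OPT : ℝ) (hOPT : IsGreatest (SWvals u) OPT) :
    ∃ x : Fin n → Fin n → ℝ, IsMixed x ∧ EpsNash u ε x ∧ SW u x ≥ ε * OPT := by
  obtain ⟨⟨y, hy, rfl⟩, -⟩ := hOPT
  obtain ⟨x, hx, hnash, hSW⟩ := stmt9_general hε fun i j => (hu i j).1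
  exact ⟨x, hx, hnash, hSW y hy⟩
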